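/- For density matrices ρ, σ on H_X ⊗ H_Y, the relative entropy is monotone under partial trace: S(ρ‖σ) ≥ S(ρ^X‖σ^X), where ρ^X = Tr_Y ρ and σ^X = Tr_Y σ. -/

import Mathlib

open scoped Kronecker ComplexOrder Classical

/-- A density matrix: positive semidefinite with unit trace. -/
def IsDensity {n : Type*} [Fintype n] [DecidableEq n] (ρ : Matrix n n ℂ) : Prop :=
  ρ.PosSemidef ∧ ρ.trace = 1

/-- Matrix logarithm of a Hermitian matrix via the spectral theorem
(with the convention `log 0 = 0` on the kernel; junk value `0` if not Hermitian). -/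
noncomputable def mlog {n : Type*} [Fintype n] [DecidableEq n]
    (M : Matrix n n ℂ) : Matrix n n ℂ :=
  if h : M.IsHermitian then
    (h.eigenvectorUnitary : Matrix n n ℂ) *
      Matrix.diagonal (fun i => (Real.log (h.eigenvalues i) : ℂ)) *
        star (h.eigenvectorUnitary : Matrix n n ℂ)
  else 0

/-- Quantum relative entropy `S(ρ‖σ) = Tr(ρ log ρ) - Tr(ρ log σ)`, with value `⊤`
when the support of `ρ` is not contained in the support of `σ`. -/
noncomputable def relEnt {n : Type*} [Fintype n] [DecidableEq n]
    (ρ σ : Matrix n n ℂ) : EReal :=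
  if ∀ v : n → ℂ, σ.mulVec v = 0 → ρ.mulVec v = 0 then
    ((((ρ * mlog ρ).trace - (ρ * mlog σ).trace).re : ℝ) : EReal)
  else ⊤

/-- Max-relative entropy `S_∞(ρ‖σ) = inf {k : ρ ≤ 2^k σ}` (as an extended real). -/
noncomputable def maxRelEnt {n : Type*} [Fintype n] [DecidableEq n]
    (ρ σ : Matrix n n ℂ) : EReal :=
  sInf {k : EReal | ∃ r : ℝ, k = (r : EReal) ∧
    ((((2 : ℝ) ^ r : ℝ) : ℂ) • σ - ρ).PosSemidef}

/-- Partial trace over the second tensor factor. -/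
noncomputable def ptraceB {A B : Type*} [Fintype A] [Fintype B]
    (M : Matrix (A × B) (A × B) ℂ) : Matrix A A ℂ :=
  Matrix.of fun a a' => ∑ b, M (a, b) (a', b)

/-!
A pair of positive semidefinite matrices has the same relative entropy as its Nussbaum–Szkoła pair
of classical distributions `P (i, j) = pᵢ |⟨xᵢ, yⱼ⟩|²`, `Q (i, j) = qⱼ |⟨xᵢ, yⱼ⟩|²`, built from the
eigenpairs `(pᵢ, xᵢ)` of `ρ` and `(qⱼ, yⱼ)` of `σ`. Classical relative entropy is determined by the
sums `∑ P² / (Q + t P)`, `t > 0`: up to the term `(∑ P) log t`, it is the limit at infinity of their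
integral over `(0, t)`. In the quantum setting such a sum is the maximum over `Z` of the quadratic
form `2 Re Tr(Z ρ) - Tr(Z⋆ Z σ) - t Tr(Z Z⋆ ρ)`. By the Kadison–Schwarz inequality
`Ψ(Z)⋆ Ψ(Z) ≤ Ψ(Z⋆ Z)` for the adjoint `Ψ` of a channel `Φ`, the form of `(Φ ρ, Φ σ)` at `Z` is at
most the form of `(ρ, σ)` at `Ψ Z`. The partial trace is the adjoint of `Z ↦ Z ⊗ 1`, for which the
inequality is an equality.
-/

open Matrix Filter Topology

section Classical

variable {ι κ : Type*} [Fintype ι] [Fintype κ] {P Q : ι → ℝ} {P' Q' : κ → ℝ}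

/-- Relative entropy of two finite families of nonnegative reals, meaningful when `P` vanishes
wherever `Q` does. -/
noncomputable def klSum (P Q : ι → ℝ) : ℝ :=
  ∑ k, P k * (Real.log (P k) - Real.log (Q k))

/-- The classical counterpart of `⟨ρ, (R_σ + t L_ρ)⁻¹ ρ⟩`, with `L` and `R` the left and right
multiplication operators on matrices; where `P k = Q k = 0` the summand is `0 / 0 = 0`. -/
noncomputable def resolventSum (P Q : ι → ℝ) (t : ℝ) : ℝ :=
  ∑ k, P k ^ 2 / (Q k + t * P k)

/-- The integral of `resolventSum P Q` over `(0, t)`. -/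
noncomputable def logSum (P Q : ι → ℝ) (t : ℝ) : ℝ :=
  ∑ k, P k * (Real.log (Q k + t * P k) - Real.log (Q k))

lemma logSum_zero (P Q : ι → ℝ) : logSum P Q 0 = 0 := by
  simp [logSum]

lemma hasDerivAt_logSum (hP : 0 ≤ P) (hQ : 0 ≤ Q) {t : ℝ} (ht : 0 < t) :
    HasDerivAt (logSum P Q) (resolventSum P Q t) t := by
  refine HasDerivAt.fun_sum fun k _ => ?_
  rcases (hP k).eq_or_lt' with hk | hk
  · simpa [hk] using hasDerivAt_const t (0 : ℝ)
  have hne : Q k + t * P k ≠ 0 := (add_pos_of_nonneg_of_pos (hQ k) (mul_pos ht hk)).ne'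
  have hlin : HasDerivAt (fun s => Q k + s * P k) (P k) t := by
    simpa using ((hasDerivAt_id t).mul_const (P k)).const_add (Q k)
  refine (((hlin.log hne).sub_const (Real.log (Q k))).const_mul (P k)).congr_deriv ?_
  ring

lemma continuousOn_logSum (hP : 0 ≤ P) (hQ : 0 ≤ Q) (hQP : ∀ k, Q k = 0 → P k = 0) :
    ContinuousOn (logSum P Q) (Set.Ici 0) := by
  refine continuousOn_finsetSum _ fun k _ => ?_
  rcases (hQ k).eq_or_lt' with hk | hk
  · simpa [hQP k hk] using continuousOn_const
  have hne (t : ℝ) (ht : t ∈ Set.Ici 0) : Q k + t * P k ≠ 0 :=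
    (add_pos_of_pos_of_nonneg hk (mul_nonneg ht (hP k))).ne'
  exact continuousOn_const.mul ((ContinuousOn.log (by fun_prop) hne).sub continuousOn_const)

lemma tendsto_log_add_mul_sub_log {p : ℝ} (q : ℝ) (hp : p ≠ 0) :
    Tendsto (fun t : ℝ => Real.log (q + t * p) - Real.log t) atTop (𝓝 (Real.log p)) := by
  have h : Tendsto (fun t : ℝ => q / t + p) atTop (𝓝 p) := by
    simpa using (tendsto_const_nhds.div_atTop tendsto_id).add_const p
  refine (h.log hp).congr' ?_
  filter_upwards [eventually_ne_atTop 0, h.eventually_ne hp] with t ht hne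
  have hfactor : q + t * p = t * (q / t + p) := by field_simp
  rw [hfactor, Real.log_mul ht hne, add_sub_cancel_left]

lemma tendsto_logSum_sub (P Q : ι → ℝ) :
    Tendsto (fun t => logSum P Q t - (∑ k, P k) * Real.log t) atTop (𝓝 (klSum P Q)) := by
  simp only [logSum, Finset.sum_mul, ← Finset.sum_sub_distrib]
  refine tendsto_finsetSum _ fun k _ => ?_
  by_cases hk : P k = 0
  · simp [hk]
  · refine (((tendsto_log_add_mul_sub_log (Q k) hk).sub_const
      (Real.log (Q k))).const_mul (P k)).congr fun t => ?_
    ring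

lemma logSum_le_logSum (hP : 0 ≤ P) (hQ : 0 ≤ Q) (hQP : ∀ k, Q k = 0 → P k = 0)
    (hP' : 0 ≤ P') (hQ' : 0 ≤ Q') (hQP' : ∀ k, Q' k = 0 → P' k = 0)
    (hres : ∀ t, 0 < t → resolventSum P' Q' t ≤ resolventSum P Q t) {t : ℝ} (ht : 0 ≤ t) :
    logSum P' Q' t ≤ logSum P Q t := by
  have hmono : MonotoneOn (fun t => logSum P Q t - logSum P' Q' t) (Set.Ici 0) := by
    refine monotoneOn_of_hasDerivWithinAt_nonneg
      (f' := fun t => resolventSum P Q t - resolventSum P' Q' t) (convex_Ici 0)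
      ((continuousOn_logSum hP hQ hQP).sub (continuousOn_logSum hP' hQ' hQP')) ?_ ?_ <;>
    simp only [interior_Ici, Set.mem_Ioi]
    · exact fun s hs =>
        ((hasDerivAt_logSum hP hQ hs).sub (hasDerivAt_logSum hP' hQ' hs)).hasDerivWithinAt
    · exact fun s hs => sub_nonneg.2 (hres s hs)
  simpa [logSum_zero] using hmono Set.self_mem_Ici ht ht

theorem klSum_le_klSum (hP : 0 ≤ P) (hQ : 0 ≤ Q) (hQP : ∀ k, Q k = 0 → P k = 0)
    (hP' : 0 ≤ P') (hQ' : 0 ≤ Q') (hQP' : ∀ k, Q' k = 0 → P' k = 0)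
    (hsum : ∑ k, P' k = ∑ k, P k)
    (hres : ∀ t, 0 < t → resolventSum P' Q' t ≤ resolventSum P Q t) :
    klSum P' Q' ≤ klSum P Q := by
  refine le_of_tendsto_of_tendsto (tendsto_logSum_sub P' Q') (tendsto_logSum_sub P Q) ?_
  filter_upwards [eventually_ge_atTop 0] with t ht
  rw [hsum]
  exact sub_le_sub_right (logSum_le_logSum hP hQ hQP hP' hQ' hQP' hres ht) _

end Classical

section Spectral

variable {n : Type*} [Fintype n] [DecidableEq n] {ρ σ : Matrix n n ℂ}

lemma mlog_eq_cfc (hρ : ρ.IsHermitian) : mlog ρ = cfc Real.log ρ := by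
  rw [mlog, dif_pos hρ, hρ.cfc_eq]
  rfl

/-- The matrix of `Z` with respect to an eigenbasis of `σ` on the source and an eigenbasis of `ρ` on
the target; its entries at `Z = 1` are the overlaps `⟨xᵢ, yⱼ⟩` of the eigenvectors. -/
noncomputable def eigenCoeff (hρ : ρ.IsHermitian) (hσ : σ.IsHermitian) (Z : Matrix n n ℂ) :
    Matrix n n ℂ :=
  star (hρ.eigenvectorUnitary : Matrix n n ℂ) * Z * (hσ.eigenvectorUnitary : Matrix n n ℂ)

lemma eigenCoeff_surjective (hρ : ρ.IsHermitian) (hσ : σ.IsHermitian) :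
    Function.Surjective (eigenCoeff hρ hσ) := by
  intro z
  refine ⟨(hρ.eigenvectorUnitary : Matrix n n ℂ) * z *
    star (hσ.eigenvectorUnitary : Matrix n n ℂ), ?_⟩
  simp only [eigenCoeff, Matrix.mul_assoc, Unitary.coe_star_mul_self, Matrix.mul_one]
  rw [← Matrix.mul_assoc, Unitary.coe_star_mul_self, Matrix.one_mul]

lemma trace_conjTranspose_mul_cfc_mul_mul_cfc (hρ : ρ.IsHermitian) (hσ : σ.IsHermitian)
    (W Z : Matrix n n ℂ) (f g : ℝ → ℝ) :
    (Wᴴ * cfc f ρ * Z * cfc g σ).trace =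
      ∑ k : n × n, ((f (hρ.eigenvalues k.1) * g (hσ.eigenvalues k.2) : ℝ) : ℂ) *
        (star (eigenCoeff hρ hσ W k.1 k.2) * eigenCoeff hρ hσ Z k.1 k.2) := by
  have hcycle : (Wᴴ * cfc f ρ * Z * cfc g σ).trace =
      ((eigenCoeff hρ hσ W)ᴴ * (diagonal (fun i => (f (hρ.eigenvalues i) : ℂ)) *
        eigenCoeff hρ hσ Z * diagonal (fun j => (g (hσ.eigenvalues j) : ℂ)))).trace := by
    rw [hρ.cfc_eq, hσ.cfc_eq, IsHermitian.cfc, IsHermitian.cfc, Unitary.conjStarAlgAut_apply,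
      Unitary.conjStarAlgAut_apply, ← Matrix.mul_assoc, trace_mul_comm]
    simp only [eigenCoeff, ← star_eq_conjTranspose, star_mul, star_star, Matrix.mul_assoc]
    rfl
  rw [hcycle, Fintype.sum_prod_type_right, trace]
  refine Finset.sum_congr rfl fun j _ => ?_
  rw [diag_apply, mul_apply]
  refine Finset.sum_congr rfl fun i _ => ?_
  rw [conjTranspose_apply, mul_diagonal, diagonal_mul]
  push_cast
  ring

lemma re_trace_conjTranspose_mul_cfc_mul_mul_cfc (hρ : ρ.IsHermitian) (hσ : σ.IsHermitian)
    (Z : Matrix n n ℂ) (f g : ℝ → ℝ) :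
    (Zᴴ * cfc f ρ * Z * cfc g σ).trace.re =
      ∑ k : n × n, f (hρ.eigenvalues k.1) * g (hσ.eigenvalues k.2) *
        Complex.normSq (eigenCoeff hρ hσ Z k.1 k.2) := by
  rw [trace_conjTranspose_mul_cfc_mul_mul_cfc hρ hσ, Complex.re_sum]
  refine Finset.sum_congr rfl fun k _ => ?_
  rw [Complex.re_ofReal_mul, Complex.star_def, ← Complex.normSq_eq_conj_mul_self,
    Complex.ofReal_re]

/-- The Nussbaum–Szkoła distribution `P (i, j) = pᵢ |⟨xᵢ, yⱼ⟩|²` of the first argument of the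
relative entropy, for the eigenpairs `(pᵢ, xᵢ)` of `ρ` and eigenvectors `yⱼ` of `σ`. -/
noncomputable def nussbaumSzkolaFst (hρ : ρ.IsHermitian) (hσ : σ.IsHermitian) (k : n × n) : ℝ :=
  hρ.eigenvalues k.1 * Complex.normSq (eigenCoeff hρ hσ 1 k.1 k.2)

/-- The Nussbaum–Szkoła distribution `Q (i, j) = qⱼ |⟨xᵢ, yⱼ⟩|²` of the second argument of the
relative entropy, for the eigenpairs `(qⱼ, yⱼ)` of `σ` and eigenvectors `xᵢ` of `ρ`. -/
noncomputable def nussbaumSzkolaSnd (hρ : ρ.IsHermitian) (hσ : σ.IsHermitian) (k : n × n) : ℝ :=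
  hσ.eigenvalues k.2 * Complex.normSq (eigenCoeff hρ hσ 1 k.1 k.2)

lemma nussbaumSzkolaFst_nonneg (hρ : ρ.PosSemidef) (hσ : σ.IsHermitian) :
    0 ≤ nussbaumSzkolaFst hρ.1 hσ :=
  fun k => mul_nonneg (hρ.eigenvalues_nonneg k.1) (Complex.normSq_nonneg _)

lemma nussbaumSzkolaSnd_nonneg (hρ : ρ.IsHermitian) (hσ : σ.PosSemidef) :
    0 ≤ nussbaumSzkolaSnd hρ hσ.1 :=
  fun k => mul_nonneg (hσ.eigenvalues_nonneg k.2) (Complex.normSq_nonneg _)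

lemma sum_nussbaumSzkolaFst (hρ : ρ.IsHermitian) (hσ : σ.IsHermitian) :
    ∑ k, nussbaumSzkolaFst hρ hσ k = ρ.trace.re := by
  have h := re_trace_conjTranspose_mul_cfc_mul_mul_cfc hρ hσ 1 id 1
  rw [cfc_id ℝ ρ hρ.isSelfAdjoint, cfc_one ℝ σ hσ.isSelfAdjoint] at h
  simpa [nussbaumSzkolaFst] using h.symm

lemma eigenvalues_mul_eigenCoeff_one_eq_zero (hρ : ρ.IsHermitian) (hσ : σ.IsHermitian)
    (hker : ∀ v, σ *ᵥ v = 0 → ρ *ᵥ v = 0) {i j : n} (hj : hσ.eigenvalues j = 0) :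
    hρ.eigenvalues i * eigenCoeff hρ hσ 1 i j = 0 := by
  have hσj : σ *ᵥ ⇑(hσ.eigenvectorBasis j) = 0 := by
    rw [hσ.mulVec_eigenvectorBasis, hj, zero_smul]
  have hρj : ρ *ᵥ (hσ.eigenvectorUnitary : Matrix n n ℂ) *ᵥ Pi.single j 1 = 0 := by
    rw [hσ.eigenvectorUnitary_mulVec]
    exact hker _ hσj
  have hdiag : eigenCoeff hρ hσ ρ =
      diagonal (fun i => (hρ.eigenvalues i : ℂ)) * eigenCoeff hρ hσ 1 := by
    have h := hρ.conjStarAlgAut_star_eigenvectorUnitary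
    rw [Unitary.conjStarAlgAut_star_apply] at h
    rw [show diagonal (fun i => (hρ.eigenvalues i : ℂ)) = _ from h.symm]
    simp only [eigenCoeff, Matrix.mul_assoc, Matrix.one_mul]
    rw [← Matrix.mul_assoc (hρ.eigenvectorUnitary : Matrix n n ℂ),
      Unitary.mul_star_self_of_mem hρ.eigenvectorUnitary.2, Matrix.one_mul]
  calc (hρ.eigenvalues i : ℂ) * eigenCoeff hρ hσ 1 i j
      = eigenCoeff hρ hσ ρ i j := by rw [hdiag, diagonal_mul]
    _ = (eigenCoeff hρ hσ ρ *ᵥ Pi.single j 1) i := by rw [mulVec_single_one, col_apply]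
    _ = 0 := by
      rw [eigenCoeff, ← mulVec_mulVec, ← mulVec_mulVec, hρj, mulVec_zero, Pi.zero_apply]

lemma nussbaumSzkolaFst_eq_zero (hρ : ρ.IsHermitian) (hσ : σ.IsHermitian)
    (hker : ∀ v, σ *ᵥ v = 0 → ρ *ᵥ v = 0) (k : n × n) (hk : nussbaumSzkolaSnd hρ hσ k = 0) :
    nussbaumSzkolaFst hρ hσ k = 0 := by
  rcases mul_eq_zero.1 hk with hq | hc
  · have h := eigenvalues_mul_eigenCoeff_one_eq_zero hρ hσ hker (i := k.1) hq
    simpa [nussbaumSzkolaFst] using h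
  · rw [nussbaumSzkolaFst, hc, mul_zero]

lemma re_trace_mul_mlog_sub (hρ : ρ.IsHermitian) (hσ : σ.IsHermitian)
    (hker : ∀ v, σ *ᵥ v = 0 → ρ *ᵥ v = 0) :
    ((ρ * mlog ρ).trace - (ρ * mlog σ).trace).re =
      klSum (nussbaumSzkolaFst hρ hσ) (nussbaumSzkolaSnd hρ hσ) := by
  have hself : (ρ * mlog ρ).trace.re = ∑ k : n × n, hρ.eigenvalues k.1 *
      Real.log (hρ.eigenvalues k.1) * Complex.normSq (eigenCoeff hρ hσ 1 k.1 k.2) := by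
    have h := re_trace_conjTranspose_mul_cfc_mul_mul_cfc hρ hσ 1 (fun x => x * Real.log x) 1
    rw [cfc_mul _ _ ρ (finite_real_spectrum.continuousOn _) (finite_real_spectrum.continuousOn _),
      cfc_id' ℝ ρ hρ.isSelfAdjoint, cfc_one ℝ σ hσ.isSelfAdjoint, ← mlog_eq_cfc hρ] at h
    simpa using h
  have hcross : (ρ * mlog σ).trace.re = ∑ k : n × n, hρ.eigenvalues k.1 *
      Real.log (hσ.eigenvalues k.2) * Complex.normSq (eigenCoeff hρ hσ 1 k.1 k.2) := by
    have h := re_trace_conjTranspose_mul_cfc_mul_mul_cfc hρ hσ 1 id Real.log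
    rw [cfc_id ℝ ρ hρ.isSelfAdjoint, ← mlog_eq_cfc hσ] at h
    simpa using h
  rw [Complex.sub_re, hself, hcross, ← Finset.sum_sub_distrib]
  refine Finset.sum_congr rfl fun k _ => ?_
  by_cases hk : nussbaumSzkolaFst hρ hσ k = 0
  · rw [hk, zero_mul]
    rw [nussbaumSzkolaFst] at hk
    linear_combination (Real.log (hρ.eigenvalues k.1) - Real.log (hσ.eigenvalues k.2)) * hk
  obtain ⟨hp, hc⟩ := mul_ne_zero_iff.1 hk
  have hq : hσ.eigenvalues k.2 ≠ 0 :=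
    left_ne_zero_of_mul (mt (nussbaumSzkolaFst_eq_zero hρ hσ hker k) hk)
  rw [nussbaumSzkolaFst, nussbaumSzkolaSnd, Real.log_mul hp hc, Real.log_mul hq hc]
  ring

end Spectral

section Variational

variable {n : Type*} [Fintype n] {ρ σ : Matrix n n ℂ}

/-- The concave quadratic form in `Z` whose maximum is `⟨ρ, (R_σ + t L_ρ)⁻¹ ρ⟩`, with `L` and `R`
the left and right multiplication operators and `⟨·, ·⟩` the Hilbert–Schmidt inner product. -/
noncomputable def dualForm (ρ σ : Matrix n n ℂ) (t : ℝ) (Z : Matrix n n ℂ) : ℝ :=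
  2 * (Z * ρ).trace.re - (Zᴴ * Z * σ).trace.re - t * (Z * Zᴴ * ρ).trace.re

lemma dualForm_eq_sum [DecidableEq n] (hρ : ρ.IsHermitian) (hσ : σ.IsHermitian) (t : ℝ)
    (Z : Matrix n n ℂ) :
    dualForm ρ σ t Z = ∑ k : n × n,
      (2 * hρ.eigenvalues k.1 *
          (star (eigenCoeff hρ hσ 1 k.1 k.2) * eigenCoeff hρ hσ Z k.1 k.2).re -
        (hσ.eigenvalues k.2 + t * hρ.eigenvalues k.1) *
          Complex.normSq (eigenCoeff hρ hσ Z k.1 k.2)) := by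
  have hlin := congrArg Complex.re (trace_conjTranspose_mul_cfc_mul_mul_cfc hρ hσ 1 Z id 1)
  have hright := re_trace_conjTranspose_mul_cfc_mul_mul_cfc hρ hσ Z 1 id
  have hleft := re_trace_conjTranspose_mul_cfc_mul_mul_cfc hρ hσ Z id 1
  simp only [cfc_id ℝ ρ hρ.isSelfAdjoint, cfc_id ℝ σ hσ.isSelfAdjoint,
    cfc_one ℝ ρ hρ.isSelfAdjoint, cfc_one ℝ σ hσ.isSelfAdjoint, conjTranspose_one,
    Pi.one_apply, id, mul_one, one_mul, Complex.re_sum, Complex.re_ofReal_mul]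
    at hlin hright hleft
  rw [dualForm, trace_mul_comm Z ρ, Matrix.mul_assoc Z, trace_mul_comm Z, hlin, hright, hleft,
    Finset.mul_sum, Finset.mul_sum, ← Finset.sum_sub_distrib, ← Finset.sum_sub_distrib]
  exact Finset.sum_congr rfl fun k _ => by ring

lemma isGreatest_two_mul_re_sub_mul_normSq {p d : ℝ} (hd : 0 ≤ d) (hdp : d = 0 → p = 0) (c : ℂ) :
    IsGreatest (Set.range fun z : ℂ => 2 * p * (star c * z).re - d * Complex.normSq z)
      (p ^ 2 / d * Complex.normSq c) := by
  rcases hd.eq_or_lt' with hd₀ | hd₀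
  · refine ⟨⟨0, ?_⟩, Set.forall_mem_range.2 fun z => ?_⟩ <;> simp [hd₀, hdp hd₀]
  -- Complete the square: the form equals the maximum minus `d |z - (p / d) c|²`.
  have hsquare (z : ℂ) : 2 * p * (star c * z).re - d * Complex.normSq z =
      p ^ 2 / d * Complex.normSq c - d * Complex.normSq (z - (p / d : ℝ) * c) := by
    simp only [Complex.normSq_apply, Complex.sub_re, Complex.sub_im, Complex.mul_re,
      Complex.mul_im, Complex.ofReal_re, Complex.ofReal_im, Complex.star_def, Complex.conj_re,
      Complex.conj_im]
    field_simp
    ring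
  simp only [hsquare]
  exact ⟨⟨(p / d : ℝ) * c, by simp⟩,
    Set.forall_mem_range.2 fun z => sub_le_self _ (mul_nonneg hd (Complex.normSq_nonneg _))⟩

theorem isGreatest_dualForm [DecidableEq n] (hρ : ρ.PosSemidef) (hσ : σ.PosSemidef) {t : ℝ}
    (ht : 0 < t) :
    IsGreatest (Set.range (dualForm ρ σ t))
      (resolventSum (nussbaumSzkolaFst hρ.1 hσ.1) (nussbaumSzkolaSnd hρ.1 hσ.1) t) := by
  have hp (i : n) : 0 ≤ t * hρ.1.eigenvalues i := mul_nonneg ht.le (hρ.eigenvalues_nonneg i)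
  have hmax (k : n × n) := isGreatest_two_mul_re_sub_mul_normSq
    (p := hρ.1.eigenvalues k.1) (add_nonneg (hσ.eigenvalues_nonneg k.2) (hp k.1))
    (fun h => by
      have h₀ := ((add_eq_zero_iff_of_nonneg (hσ.eigenvalues_nonneg k.2) (hp k.1)).1 h).2
      exact (mul_eq_zero.1 h₀).resolve_left ht.ne')
    (eigenCoeff hρ.1 hσ.1 1 k.1 k.2)
  have hsum : resolventSum (nussbaumSzkolaFst hρ.1 hσ.1) (nussbaumSzkolaSnd hρ.1 hσ.1) t =
      ∑ k : n × n, hρ.1.eigenvalues k.1 ^ 2 /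
        (hσ.1.eigenvalues k.2 + t * hρ.1.eigenvalues k.1) *
          Complex.normSq (eigenCoeff hρ.1 hσ.1 1 k.1 k.2) := by
    refine Finset.sum_congr rfl fun k _ => ?_
    rw [nussbaumSzkolaFst, nussbaumSzkolaSnd, ← mul_assoc, ← add_mul, mul_pow,
      mul_div_mul_comm, sq (Complex.normSq _), mul_self_div_self]
  rw [hsum]
  constructor
  · choose z hz using fun k => (hmax k).1
    obtain ⟨Z, hZ⟩ := eigenCoeff_surjective hρ.1 hσ.1 (of fun i j => z (i, j))
    refine ⟨Z, ?_⟩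
    rw [dualForm_eq_sum hρ.1 hσ.1, hZ]
    exact Finset.sum_congr rfl fun k _ => hz k
  · rintro _ ⟨Z, rfl⟩
    rw [dualForm_eq_sum hρ.1 hσ.1]
    exact Finset.sum_le_sum fun k _ => (hmax k).2 ⟨_, rfl⟩

end Variational

section PosSemidef

variable {n : Type*} [Fintype n] {A B : Matrix n n ℂ}

open scoped MatrixOrder in
lemma exists_eq_conjTranspose_mul_self (hA : A.PosSemidef) : ∃ C : Matrix n n ℂ, A = Cᴴ * C :=
  CStarAlgebra.nonneg_iff_eq_star_mul_self.1 hA.nonneg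

lemma trace_mul_nonneg (hA : A.PosSemidef) (hB : B.PosSemidef) : 0 ≤ (A * B).trace := by
  obtain ⟨C, rfl⟩ := exists_eq_conjTranspose_mul_self hB
  rw [← Matrix.mul_assoc, trace_mul_comm, ← Matrix.mul_assoc]
  exact (hA.mul_mul_conjTranspose_same C).trace_nonneg

lemma mul_eq_zero_of_trace_mul_eq_zero (hA : A.PosSemidef) (hB : B.PosSemidef)
    (h : (A * B).trace = 0) : A * B = 0 := by
  obtain ⟨C, rfl⟩ := exists_eq_conjTranspose_mul_self hA
  obtain ⟨D, rfl⟩ := exists_eq_conjTranspose_mul_self hB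
  have htrace : ((C * Dᴴ)ᴴ * (C * Dᴴ)).trace = 0 := by
    rw [← h, conjTranspose_mul, conjTranspose_conjTranspose, Matrix.mul_assoc, trace_mul_comm]
    simp only [Matrix.mul_assoc]
  have hCD : C * Dᴴ = 0 := trace_conjTranspose_mul_self_eq_zero_iff.1 htrace
  rw [Matrix.mul_assoc, ← Matrix.mul_assoc C, hCD, Matrix.zero_mul, Matrix.mul_zero]

lemma trace_vecMulVec_star_mul (v : n → ℂ) (M : Matrix n n ℂ) :
    (vecMulVec v (star v) * M).trace = star v ⬝ᵥ (M *ᵥ v) := by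
  rw [trace_mul_comm, mul_vecMulVec, trace_vecMulVec, dotProduct_comm]

end PosSemidef

section DataProcessing

variable {m n : Type*} [Fintype m] [Fintype n] [DecidableEq m] [DecidableEq n]
  {Φ : Matrix m m ℂ → Matrix n n ℂ} {Ψ : Matrix n n ℂ → Matrix m m ℂ}

/-- `Ψ` is the adjoint of `Φ` for the trace pairing, preserves `1` and `ᴴ`, and satisfies the
Kadison–Schwarz inequality. Every quantum channel `Φ` has such an adjoint; linearity of both maps
follows from the pairing. -/
structure IsSchwarzAdjoint (Φ : Matrix m m ℂ → Matrix n n ℂ) (Ψ : Matrix n n ℂ → Matrix m m ℂ) :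
    Prop where
  trace_mul_map (A : Matrix n n ℂ) (M : Matrix m m ℂ) : (A * Φ M).trace = (Ψ A * M).trace
  adjoint_one : Ψ 1 = 1
  adjoint_conjTranspose (A : Matrix n n ℂ) : Ψ Aᴴ = (Ψ A)ᴴ
  schwarz (A : Matrix n n ℂ) : (Ψ (Aᴴ * A) - (Ψ A)ᴴ * Ψ A).PosSemidef

namespace IsSchwarzAdjoint

lemma trace_map (h : IsSchwarzAdjoint Φ Ψ) (M : Matrix m m ℂ) : (Φ M).trace = M.trace := by
  simpa [h.adjoint_one] using h.trace_mul_map 1 M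

lemma isHermitian_map (h : IsSchwarzAdjoint Φ Ψ) {M : Matrix m m ℂ} (hM : M.IsHermitian) :
    (Φ M).IsHermitian := by
  refine ext_iff_trace_mul_left.2 fun A => ?_
  calc (A * (Φ M)ᴴ).trace = star (Aᴴ * Φ M).trace := by
        rw [← trace_conjTranspose, conjTranspose_mul, conjTranspose_conjTranspose, trace_mul_comm]
    _ = (M * Ψ A).trace := by
        rw [h.trace_mul_map, h.adjoint_conjTranspose, ← trace_conjTranspose, conjTranspose_mul,
          conjTranspose_conjTranspose, hM.eq]
    _ = (A * Φ M).trace := by rw [h.trace_mul_map, trace_mul_comm]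

lemma posSemidef_adjoint (h : IsSchwarzAdjoint Φ Ψ) {A : Matrix n n ℂ} (hA : A.PosSemidef) :
    (Ψ A).PosSemidef := by
  obtain ⟨C, rfl⟩ := exists_eq_conjTranspose_mul_self hA
  simpa using (h.schwarz C).add (posSemidef_conjTranspose_mul_self (Ψ C))

lemma posSemidef_map (h : IsSchwarzAdjoint Φ Ψ) {M : Matrix m m ℂ} (hM : M.PosSemidef) :
    (Φ M).PosSemidef := by
  refine .of_dotProduct_mulVec_nonneg (h.isHermitian_map hM.1) fun v => ?_
  rw [← trace_vecMulVec_star_mul, h.trace_mul_map]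
  exact trace_mul_nonneg (h.posSemidef_adjoint (posSemidef_vecMulVec_self_star v)) hM

lemma map_mulVec_eq_zero (h : IsSchwarzAdjoint Φ Ψ) {ρ σ : Matrix m m ℂ} (hρ : ρ.PosSemidef)
    (hσ : σ.PosSemidef) (hker : ∀ v, σ *ᵥ v = 0 → ρ *ᵥ v = 0) (v : n → ℂ)
    (hv : Φ σ *ᵥ v = 0) : Φ ρ *ᵥ v = 0 := by
  set E := Ψ (vecMulVec v (star v))
  have hE : E.PosSemidef := h.posSemidef_adjoint (posSemidef_vecMulVec_self_star v)
  have hσE : σ * E = 0 := by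
    refine mul_eq_zero_of_trace_mul_eq_zero hσ hE ?_
    rw [trace_mul_comm, ← h.trace_mul_map, trace_vecMulVec_star_mul, hv, dotProduct_zero]
  have hρE : ρ * E = 0 := by
    refine Matrix.ext_of_mulVec_single fun i => ?_
    rw [← mulVec_mulVec, zero_mulVec]
    exact hker _ (by rw [mulVec_mulVec, hσE, zero_mulVec])
  rw [← (h.posSemidef_map hρ).dotProduct_mulVec_zero_iff, ← trace_vecMulVec_star_mul,
    h.trace_mul_map, trace_mul_comm, hρE, trace_zero]

lemma re_trace_conjTranspose_mul_self_mul_le (h : IsSchwarzAdjoint Φ Ψ) {M : Matrix m m ℂ}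
    (hM : M.PosSemidef) (Z : Matrix n n ℂ) :
    ((Ψ Z)ᴴ * Ψ Z * M).trace.re ≤ (Zᴴ * Z * Φ M).trace.re := by
  rw [h.trace_mul_map, ← sub_nonneg, ← Complex.sub_re, ← trace_sub, ← Matrix.sub_mul]
  exact (Complex.nonneg_iff.1 (trace_mul_nonneg (h.schwarz Z) hM)).1

lemma dualForm_map_le (h : IsSchwarzAdjoint Φ Ψ) {ρ σ : Matrix m m ℂ} (hρ : ρ.PosSemidef)
    (hσ : σ.PosSemidef) {t : ℝ} (ht : 0 ≤ t) (Z : Matrix n n ℂ) :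
    dualForm (Φ ρ) (Φ σ) t Z ≤ dualForm ρ σ t (Ψ Z) := by
  have hright := h.re_trace_conjTranspose_mul_self_mul_le hσ Z
  have hleft := h.re_trace_conjTranspose_mul_self_mul_le hρ Zᴴ
  rw [h.adjoint_conjTranspose, conjTranspose_conjTranspose, conjTranspose_conjTranspose] at hleft
  rw [dualForm, dualForm, h.trace_mul_map Z ρ]
  gcongr

end IsSchwarzAdjoint

theorem relEnt_ptrace_le_general (h : IsSchwarzAdjoint Φ Ψ) {ρ σ : Matrix m m ℂ}
    (hρ : ρ.PosSemidef) (hσ : σ.PosSemidef) : relEnt (Φ ρ) (Φ σ) ≤ relEnt ρ σ := by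
  by_cases hker : ∀ v, σ *ᵥ v = 0 → ρ *ᵥ v = 0
  · have hker' := h.map_mulVec_eq_zero hρ hσ hker
    have hρ' := h.posSemidef_map hρ
    have hσ' := h.posSemidef_map hσ
    rw [relEnt, relEnt, if_pos hker, if_pos hker', EReal.coe_le_coe_iff,
      re_trace_mul_mlog_sub hρ.1 hσ.1 hker, re_trace_mul_mlog_sub hρ'.1 hσ'.1 hker']
    refine klSum_le_klSum (nussbaumSzkolaFst_nonneg hρ hσ.1) (nussbaumSzkolaSnd_nonneg hρ.1 hσ)
      (nussbaumSzkolaFst_eq_zero hρ.1 hσ.1 hker) (nussbaumSzkolaFst_nonneg hρ' hσ'.1)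
      (nussbaumSzkolaSnd_nonneg hρ'.1 hσ') (nussbaumSzkolaFst_eq_zero hρ'.1 hσ'.1 hker')
      (by rw [sum_nussbaumSzkolaFst, sum_nussbaumSzkolaFst, h.trace_map]) fun t ht => ?_
    obtain ⟨Z, hZ⟩ := (isGreatest_dualForm hρ' hσ' ht).1
    exact hZ.symm.trans_le <| (h.dualForm_map_le hρ hσ ht.le Z).trans <|
      (isGreatest_dualForm hρ hσ ht).2 ⟨Ψ Z, rfl⟩
  · exact le_top.trans_eq (if_neg hker).symm

end DataProcessing

section PartialTrace

variable {X Y : Type*} [Fintype X] [Fintype Y] [DecidableEq Y]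

lemma trace_mul_ptraceB (A : Matrix X X ℂ) (M : Matrix (X × Y) (X × Y) ℂ) :
    (A * ptraceB M).trace = ((A ⊗ₖ (1 : Matrix Y Y ℂ)) * M).trace := by
  simp only [trace, diag_apply, mul_apply, ptraceB, of_apply, Fintype.sum_prod_type,
    kroneckerMap_apply, one_apply, mul_ite, mul_one, mul_zero, ite_mul, zero_mul, Finset.mul_sum,
    Finset.sum_ite_eq, Finset.mem_univ, if_true]
  exact Finset.sum_congr rfl fun a _ => Finset.sum_comm

lemma isSchwarzAdjoint_ptraceB [DecidableEq X] :
    IsSchwarzAdjoint (ptraceB : Matrix (X × Y) (X × Y) ℂ → Matrix X X ℂ)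
      fun A => A ⊗ₖ (1 : Matrix Y Y ℂ) where
  trace_mul_map := trace_mul_ptraceB
  adjoint_one := one_kronecker_one
  adjoint_conjTranspose A := by rw [conjTranspose_kronecker, conjTranspose_one]
  schwarz A := by
    rw [conjTranspose_kronecker, conjTranspose_one, ← mul_kronecker_mul, Matrix.one_mul, sub_self]
    exact .zero

end PartialTrace

theorem relEnt_ptrace_le {X Y : Type*} [Fintype X] [Fintype Y]
    [DecidableEq X] [DecidableEq Y]
    (ρ σ : Matrix (X × Y) (X × Y) ℂ) (hρ : IsDensity ρ) (hσ : IsDensity σ) :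
    relEnt (ptraceB ρ) (ptraceB σ) ≤ relEnt ρ σ :=
  relEnt_ptrace_le_general isSchwarzAdjoint_ptraceB hρ.1 hσ.1
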